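/- Let R be a Gorenstein commutative Noetherian ring, N a finitely generated R-module, and t a natural number. Then: (i) Supp Ext^t_R(N, R) ⊆ Supp N, and every prime in Supp Ext^t_R(N, R) has height at least t; (ii) for every prime ideal p that is a minimal element of Supp N, one has p ∈ Supp Ext^t_R(N, R) if and only if ht p = t. -/

import Mathlib

/-!
STATEMENT 9: Let R be a Gorenstein commutative Noetherian ring, N a finitely generated
R-module, and t a natural number. Then:
(i) Supp Ext^t_R(N, R) ⊆ Supp N, and every prime in Supp Ext^t_R(N, R) has height at least t;
(ii) for every prime ideal p that is a minimal element of Supp N, one has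
p ∈ Supp Ext^t_R(N, R) if and only if ht p = t.
-/

open CategoryTheory Opposite

noncomputable section

universe u

/-- The `t`-th Ext group `Ext_R^t(N, R)`, as an `R`-module. -/
abbrev extPow (R : Type u) [CommRing R] (N : Type u) [AddCommGroup N] [Module R N]
    (t : ℕ) : ModuleCat.{u} R :=
  ((_root_.Ext.{u} R (ModuleCat.{u} R) t).obj (op (ModuleCat.of R N))).obj (ModuleCat.of R R)

/-- `A` has finite injective dimension as a module over itself. -/
def HasFiniteSelfInjDim (A : Type u) [CommRing A] : Prop :=
  ∃ n : ℕ, ∀ (M : ModuleCat.{u} A) (i : ℕ), n < i →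
    Subsingleton (((_root_.Ext.{u} A (ModuleCat.{u} A) i).obj (op M)).obj (ModuleCat.of A A))

/-- A Gorenstein (commutative Noetherian) local ring. -/
def IsGorensteinLocalRing (A : Type u) [CommRing A] : Prop :=
  IsNoetherianRing A ∧ IsLocalRing A ∧ HasFiniteSelfInjDim A

/-- A commutative Noetherian ring is Gorenstein if all its localizations at primes are
Gorenstein local rings. -/
def IsGorensteinRing (R : Type u) [CommRing R] : Prop :=
  ∀ (p : Ideal R) [p.IsPrime], IsGorensteinLocalRing (Localization.AtPrime p)

/-!
* If `P ⋖ Q` and `x ∈ Q \ P`, multiplication by `x` is not surjective on a nonzero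
  `Ext^i(R ⧸ P, Y)_Q`, by Nakayama, so `Ext^(i+1)(R ⧸ (P + (x)), Y)_Q ≠ 0`, and a prime filtration
  of `R ⧸ (P + (x))` produces `Ext^(i+1)(R ⧸ Q, Y)_Q ≠ 0` (Bass). Climbing from a minimal prime,
  this gives `Ext^h(R ⧸ Q, R)_Q ≠ 0` for `h = ht Q`.
* Let `A` be local of dimension `d` with residue field `k` and finite self-injective dimension. Let
  `r` be the least and `s` the greatest degree in which `Ext(k, A)` is nonzero. By Rees there is a
  regular sequence of length `r` with `k` embedded in the quotient of `A` by it. As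
  `Ext^(s+1)(-, A) = 0`, restriction along this embedding is surjective on `Ext^s`, and the quotient
  has projective dimension `r`; hence `s ≤ r`, and both are equal to `d` by the first point.
* A module supported at the closed point has a prime filtration with all quotients `k`, so its
  `Ext` into `A` is concentrated in degree `d` as well, where it is nonzero because it surjects onto
  `Ext^d(k, A)`.
* `Ext` of finite modules commutes with localization, which reduces the claims at a prime `p` to the
  local ring at `p`; at a minimal prime of the support the localized module is supported at the
  closed point.
-/

open scoped Pointwise

section LinearExt

variable {R : Type*} [CommRing R] {C : Type*} [Category* C] [Abelian C] [HasExt.{u} C] [Linear R C]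

lemma mk₀_smul_id_comp {X Y : C} {i : ℕ} (r : R) (x : Abelian.Ext X Y i) :
    (Abelian.Ext.mk₀ (r • 𝟙 X)).comp x (zero_add i) = r • x := by
  simp [Abelian.Ext.mk₀_smul]

variable (R) in
/-- The linear equivalence of `Ext` modules induced by isomorphisms in both variables. -/
def extCongr {X X' Y Y' : C} (e : X ≅ X') (f : Y ≅ Y') (i : ℕ) :
    Abelian.Ext X Y i ≃ₗ[R] Abelian.Ext X' Y' i :=
  LinearEquiv.ofLinearMap
    ((Abelian.Ext.mk₀ f.hom).postcompOfLinear R X' (add_zero i) ∘ₗ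
      (Abelian.Ext.mk₀ e.inv).precompOfLinear R Y (zero_add i))
    ((Abelian.Ext.mk₀ e.hom).precompOfLinear R Y (zero_add i) ∘ₗ
      (Abelian.Ext.mk₀ f.inv).postcompOfLinear R X' (add_zero i))
    (by ext x; simp) (by ext x; simp)

variable (R) in
lemma exact_precompOfLinear_mk₀ {T : ShortComplex C} (hT : T.ShortExact) (Y : C) (i : ℕ) :
    Function.Exact ((Abelian.Ext.mk₀ T.g).precompOfLinear R Y (zero_add i))
      ((Abelian.Ext.mk₀ T.f).precompOfLinear R Y (zero_add i)) := fun x =>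
  ⟨fun hx => Abelian.Ext.contravariant_sequence_exact₂ hT Y x hx, by
    rintro ⟨y, rfl⟩
    change (Abelian.Ext.mk₀ T.f).comp ((Abelian.Ext.mk₀ T.g).comp y (zero_add i)) (zero_add i) = 0
    simp⟩

variable (R) in
lemma exact_precompOfLinear_extClass {T : ShortComplex C} (hT : T.ShortExact) (Y : C) (i : ℕ) :
    Function.Exact ((Abelian.Ext.mk₀ T.f).precompOfLinear R Y (zero_add i))
      (hT.extClass.precompOfLinear R Y (add_comm 1 i)) := fun x =>
  ⟨fun hx => Abelian.Ext.contravariant_sequence_exact₁ hT Y x (add_comm 1 i) hx, by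
    rintro ⟨y, rfl⟩
    exact hT.extClass_comp_assoc y (h := add_comm 1 i)⟩

end LinearExt

section Support

variable {R : Type u} [CommRing R]

lemma annihilator_le_annihilator_ext (X Y : ModuleCat.{u} R) (i : ℕ) :
    Module.annihilator R X ≤ Module.annihilator R (Abelian.Ext X Y i) := by
  intro r hr
  have smul_id : r • 𝟙 X = 0 := by
    rw [← ModuleCat.lsmul_eq_smul_id, Module.mem_annihilator_iff_lsmul_eq_zero.mp hr]; rfl
  rw [Module.mem_annihilator]
  intro x
  rw [← mk₀_smul_id_comp, smul_id, Abelian.Ext.mk₀_zero, Abelian.Ext.zero_comp]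

lemma support_ext_subset (X Y : ModuleCat.{u} R) [Module.Finite R X] (i : ℕ) :
    Module.support R (Abelian.Ext X Y i) ⊆ Module.support R X := by
  intro p hp
  rw [Module.mem_support_iff_of_finite]
  exact (annihilator_le_annihilator_ext X Y i).trans (Module.annihilator_le_of_mem_support hp)

lemma support_subset_union_of_exact {M₁ M₂ M₃ : Type*} [AddCommGroup M₁] [Module R M₁]
    [AddCommGroup M₂] [Module R M₂] [AddCommGroup M₃] [Module R M₃] {f : M₁ →ₗ[R] M₂}
    {g : M₂ →ₗ[R] M₃} (hfg : Function.Exact f g) :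
    Module.support R M₂ ⊆ Module.support R M₁ ∪ Module.support R M₃ := by
  intro q hq
  by_contra! h
  simp only [Set.mem_union, not_or, Module.notMem_support_iff'] at h
  obtain ⟨h₁, h₃⟩ := h
  obtain ⟨m, hm⟩ := Module.mem_support_iff'.mp hq
  obtain ⟨r, hr, hrm⟩ := h₃ (g m)
  obtain ⟨y, hy⟩ := (hfg _).mp ((g.map_smul r m).trans hrm)
  obtain ⟨s, hs, hsy⟩ := h₁ y
  refine hm (s * r) (q.2.mul_notMem hs hr) ?_
  rw [mul_smul, ← hy, ← map_smul, hsy, map_zero]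

lemma support_ext_subset_union {T : ShortComplex (ModuleCat.{u} R)} (hT : T.ShortExact)
    (Y : ModuleCat.{u} R) (i : ℕ) :
    Module.support R (Abelian.Ext T.X₂ Y i) ⊆
      Module.support R (Abelian.Ext T.X₃ Y i) ∪ Module.support R (Abelian.Ext T.X₁ Y i) :=
  support_subset_union_of_exact (exact_precompOfLinear_mk₀ R hT Y i)

lemma nontrivial_ext_of_injective {T M N : ModuleCat.{u} R} (f : M →ₗ[R] N)
    (hf : Function.Injective f) {n : ℕ} [Nontrivial (Abelian.Ext M T n)]
    (h : Subsingleton (Abelian.Ext (ModuleCat.of R (N ⧸ LinearMap.range f)) T (n + 1))) :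
    Nontrivial (Abelian.Ext N T n) := by
  have hfg : Function.Exact f (LinearMap.range f).mkQ := LinearMap.exact_map_mkQ_range f
  have hS := ModuleCat.shortComplex_shortExact
    (ModuleCat.shortComplexOfCompEqZero f (LinearMap.range f).mkQ hfg.linearMap_comp_eq_zero)
    hfg hf (Submodule.mkQ_surjective _)
  have hsurj : Function.Surjective fun y : Abelian.Ext N T n =>
      (Abelian.Ext.mk₀ (ModuleCat.ofHom f)).comp y (zero_add n) := fun x =>
    Abelian.Ext.contravariant_sequence_exact₁ hS T x (add_comm 1 n) (Subsingleton.elim _ _)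
  exact hsurj.nontrivial

lemma mem_support_quotient_iff {P Q : PrimeSpectrum R} :
    Q ∈ Module.support R (R ⧸ P.asIdeal) ↔ P ≤ Q := by
  rw [Module.support_eq_zeroLocus, Ideal.annihilator_quotient]
  rfl

variable [IsNoetherianRing R]

theorem exists_mem_support_ext_quotient_prime (Y : ModuleCat.{u} R) {i : ℕ} {q : PrimeSpectrum R}
    (M : Type u) [AddCommGroup M] [Module R M] [hM : Module.Finite R M]
    (hq : q ∈ Module.support R (Abelian.Ext (ModuleCat.of R M) Y i)) :
    ∃ Q ∈ Module.support R M,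
      q ∈ Module.support R (Abelian.Ext (ModuleCat.of R (R ⧸ Q.asIdeal)) Y i) := by
  induction hM using IsNoetherianRing.induction_on_isQuotientEquivQuotientPrime R with
  | subsingleton N =>
    have : q ∈ Module.support R N := support_ext_subset (.of R N) Y i hq
    simp [Module.support_eq_empty] at this
  | quotient N p e =>
    refine ⟨p, ?_, ?_⟩
    · rw [e.support_eq, mem_support_quotient_iff]
    · rwa [← (extCongr R e.toModuleIso (Iso.refl Y) i).support_eq]
  | exact N₁ N₂ N₃ f g hf hg hfg h₁ h₃ =>
    have hS := ModuleCat.shortComplex_shortExact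
      (ModuleCat.shortComplexOfCompEqZero f g hfg.linearMap_comp_eq_zero) hfg hf hg
    rcases support_ext_subset_union hS Y i hq with h | h
    · obtain ⟨Q, hQ, hqQ⟩ := h₃ h
      exact ⟨Q, Module.support_subset_of_surjective g hg hQ, hqQ⟩
    · obtain ⟨Q, hQ, hqQ⟩ := h₁ h
      exact ⟨Q, Module.support_subset_of_injective f hf hQ, hqQ⟩

lemma support_ext_inter_zeroLocus_subset {M Y : ModuleCat.{u} R} [Module.Finite R M]
    [Module.Finite R Y] {x : R} (hx : IsSMulRegular M x) (i : ℕ) :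
    Module.support R (Abelian.Ext M Y i) ∩ PrimeSpectrum.zeroLocus {x} ⊆
      Module.support R (Abelian.Ext (ModuleCat.of R (QuotSMulTop x M)) Y (i + 1)) := by
  have hS := hx.smulShortComplex_shortExact
  let δ : Abelian.Ext M Y i →ₗ[R] Abelian.Ext (ModuleCat.of R (QuotSMulTop x M)) Y (i + 1) :=
    hS.extClass.precompOfLinear R Y (add_comm 1 i)
  have mk₀_comp (z : Abelian.Ext M Y i) :
      (Abelian.Ext.mk₀ (M.smulShortComplex x).f).comp z (zero_add i) = x • z :=
    mk₀_smul_id_comp x z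
  have ker_δ : LinearMap.ker δ = x • (⊤ : Submodule R (Abelian.Ext M Y i)) := by
    ext y
    simp only [LinearMap.mem_ker, Submodule.mem_smul_pointwise_iff_exists, Submodule.mem_top,
      true_and]
    exact (exact_precompOfLinear_extClass R hS Y i y).trans
      (exists_congr fun z => Eq.congr_left (mk₀_comp z))
  rw [← Module.support_quotSMulTop]
  refine Module.support_subset_of_injective (Submodule.liftQ _ δ ker_δ.ge) ?_
  rw [← LinearMap.ker_eq_bot, Submodule.ker_liftQ_eq_bot _ _ _ ker_δ.le]

theorem exists_lt_mem_support_ext_succ (Y : ModuleCat.{u} R) [Module.Finite R Y]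
    {P Q : PrimeSpectrum R} (hPQ : P < Q) {i : ℕ}
    (hQ : Q ∈ Module.support R (Abelian.Ext (ModuleCat.of R (R ⧸ P.asIdeal)) Y i)) :
    ∃ Q' : PrimeSpectrum R, P < Q' ∧ Q' ≤ Q ∧
      Q ∈ Module.support R (Abelian.Ext (ModuleCat.of R (R ⧸ Q'.asIdeal)) Y (i + 1)) := by
  obtain ⟨x, hxQ, hxP⟩ := SetLike.exists_of_lt (show P.asIdeal < Q.asIdeal from hPQ)
  have hx : IsSMulRegular (R ⧸ P.asIdeal) x := by
    intro a b hab
    simp only [Algebra.smul_def] at hab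
    exact mul_left_cancel₀ (by rwa [Ideal.Quotient.algebraMap_eq, Ne,
      Ideal.Quotient.eq_zero_iff_mem]) hab
  have hQ_quot := support_ext_inter_zeroLocus_subset (M := .of R (R ⧸ P.asIdeal)) hx i
    ⟨hQ, by simpa using hxQ⟩
  obtain ⟨Q', hQ', hQQ'⟩ := exists_mem_support_ext_quotient_prime Y _ hQ_quot
  rw [Module.support_quotSMulTop] at hQ'
  have hxQ' : x ∈ Q'.asIdeal := by simpa using hQ'.2
  refine ⟨Q', lt_of_le_of_ne (mem_support_quotient_iff.mp hQ'.1) ?_,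
    mem_support_quotient_iff.mp (support_ext_subset _ Y _ hQQ'), hQQ'⟩
  rintro rfl
  exact hxP hxQ'

lemma mem_support_ext_succ_of_covBy (Y : ModuleCat.{u} R) [Module.Finite R Y]
    {P Q : PrimeSpectrum R} (hPQ : P ⋖ Q) {i : ℕ}
    (hP : P ∈ Module.support R (Abelian.Ext (ModuleCat.of R (R ⧸ P.asIdeal)) Y i)) :
    Q ∈ Module.support R (Abelian.Ext (ModuleCat.of R (R ⧸ Q.asIdeal)) Y (i + 1)) := by
  obtain ⟨Q', hPQ', hQ'Q, hQ⟩ :=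
    exists_lt_mem_support_ext_succ Y hPQ.lt (Module.mem_support_mono hPQ.le hP)
  rwa [hQ'Q.eq_of_not_lt (hPQ.2 hPQ')] at hQ

lemma exists_le_mem_support_ext_quotient_self (Y : ModuleCat.{u} R) [Module.Finite R Y]
    {P Q : PrimeSpectrum R} {i : ℕ}
    (hQ : Q ∈ Module.support R (Abelian.Ext (ModuleCat.of R (R ⧸ P.asIdeal)) Y i)) :
    ∃ j ≥ i, Q ∈ Module.support R (Abelian.Ext (ModuleCat.of R (R ⧸ Q.asIdeal)) Y j) := by
  have : WellFoundedGT (PrimeSpectrum R) :=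
    StrictMono.wellFoundedGT (f := PrimeSpectrum.asIdeal) fun _ _ h => h
  induction P using WellFoundedGT.induction generalizing i with
  | ind P ih =>
    have hPQ : P ≤ Q := mem_support_quotient_iff.mp (support_ext_subset _ Y i hQ)
    rcases hPQ.eq_or_lt with rfl | hlt
    · exact ⟨i, le_rfl, hQ⟩
    · obtain ⟨Q', hPQ', -, hQ'⟩ := exists_lt_mem_support_ext_succ Y hlt hQ
      obtain ⟨j, hj, hQj⟩ := ih Q' hPQ' hQ'
      exact ⟨j, by omega, hQj⟩

lemma mem_support_ext_zero_of_mem_associatedPrimes (Y : ModuleCat.{u} R) {Q : PrimeSpectrum R}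
    (hQ : Q.asIdeal ∈ associatedPrimes R Y) :
    Q ∈ Module.support R (Abelian.Ext (ModuleCat.of R (R ⧸ Q.asIdeal)) Y 0) := by
  obtain ⟨-, f, hf⟩ := (isAssociatedPrime_iff_exists_injective_linearMap _ _).mp hQ
  let e : Abelian.Ext (ModuleCat.of R (R ⧸ Q.asIdeal)) Y 0 ≃ₗ[R] ((R ⧸ Q.asIdeal) →ₗ[R] Y) :=
    Abelian.Ext.linearEquiv₀.trans ModuleCat.homLinearEquiv
  rw [e.support_eq, Module.mem_support_iff']
  refine ⟨f, fun r hr hrf => hr (Ideal.Quotient.eq_zero_iff_mem.mp (hf ?_))⟩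
  calc f (Ideal.Quotient.mk Q.asIdeal r) = f (r • 1) := by rw [Algebra.smul_def, mul_one]; rfl
    _ = 0 := by rw [map_smul, ← LinearMap.smul_apply, hrf, LinearMap.zero_apply]
    _ = f 0 := f.map_zero.symm

theorem mem_support_ext_quotient_of_height_eq {h : ℕ} {Q : PrimeSpectrum R}
    (hQ : Order.height Q = h) :
    Q ∈ Module.support R (Abelian.Ext (ModuleCat.of R (R ⧸ Q.asIdeal)) (ModuleCat.of R R) h) := by
  induction h generalizing Q with
  | zero =>
    have hmin : IsMin Q := by simpa using hQ
    have hQ_minimal : Q.asIdeal ∈ minimalPrimes R := by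
      rw [minimalPrimes_eq_minimals]
      exact ⟨Q.2, fun p hp hle => hmin (b := ⟨p, hp⟩) hle⟩
    apply mem_support_ext_zero_of_mem_associatedPrimes
    apply Module.associatedPrimes.minimalPrimes_annihilator_subset_associatedPrimes R R
    rwa [Module.annihilator_eq_bot.mpr inferInstance]
  | succ h ih =>
    obtain ⟨P, hPQ, hP⟩ : ∃ P < Q, Order.height P = h :=
      ((Order.height_eq_coe_add_one_iff (x := Q) (n := h)).mp (by simpa using hQ)).2.1
    refine mem_support_ext_succ_of_covBy _ ⟨hPQ, fun Q' hPQ' hQ'Q => ?_⟩ (ih hP)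
    have h₁ := (add_le_add_left (Order.height_add_one_le hPQ') 1).trans
      (Order.height_add_one_le hQ'Q)
    rw [hP, hQ] at h₁
    norm_cast at h₁
    omega

end Support

section Local

open IsLocalRing RingTheory.Sequence

variable {A : Type u} [CommRing A] [IsLocalRing A]

variable (A) in
/-- The residue field of a local ring, as an object of the category of modules over the ring. -/
abbrev residueModule : ModuleCat.{u} A :=
  ModuleCat.of A (A ⧸ (closedPoint A).asIdeal)

variable [IsNoetherianRing A]

lemma exists_injective_residue_or_isSMulRegular (M : Type u) [AddCommGroup M] [Module A M]
    [Module.Finite A M] :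
    (∃ f : residueModule A →ₗ[A] M, Function.Injective f) ∨
      ∃ x ∈ maximalIdeal A, IsSMulRegular M x := by
  rcases subsingleton_or_nontrivial (residueModule A →ₗ[A] M) with h | h
  · obtain ⟨x, hx, hreg⟩ := IsSMulRegular.subsingleton_linearMap_iff.mp h
    rw [Ideal.annihilator_quotient] at hx
    exact .inr ⟨x, hx, hreg⟩
  · obtain ⟨f, hf⟩ := exists_ne (0 : residueModule A →ₗ[A] M)
    have : IsSimpleModule A (residueModule A) :=
      isSimpleModule_iff_quot_maximal.mpr ⟨maximalIdeal A, inferInstance, ⟨.refl _ _⟩⟩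
    exact .inl ⟨f, f.injective_or_eq_zero.resolve_right hf⟩

lemma exists_injective_residue_of_support_eq {M : Type u} [AddCommGroup M] [Module A M]
    (hM : Module.support A M = {closedPoint A}) :
    ∃ f : residueModule A →ₗ[A] M, Function.Injective f := by
  have : Nontrivial M := (Module.nonempty_support_iff (R := A)).mp ⟨closedPoint A, hM.ge rfl⟩
  obtain ⟨Q, hQ⟩ := associatedPrimes.nonempty A M
  obtain ⟨hQ_prime, f, hf⟩ := (isAssociatedPrime_iff_exists_injective_linearMap _ _).mp hQ
  have hQ_mem : (⟨Q, hQ_prime⟩ : PrimeSpectrum A) ∈ Module.support A M :=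
    Module.support_subset_of_injective f hf
      ((mem_support_quotient_iff (P := ⟨Q, hQ_prime⟩)).mpr le_rfl)
  have hQ_eq : Q = (closedPoint A).asIdeal := congrArg PrimeSpectrum.asIdeal (hM.le hQ_mem)
  subst hQ_eq
  exact ⟨f, hf⟩

theorem subsingleton_ext_of_forall_residue (T : ModuleCat.{u} A) [Module.Finite A T] {i : ℕ}
    (h : ∀ j ≥ i, Subsingleton (Abelian.Ext (residueModule A) T j)) (M : ModuleCat.{u} A)
    [Module.Finite A M] : Subsingleton (Abelian.Ext M T i) := by
  by_contra! hM
  obtain ⟨Q, -, hQ⟩ := exists_mem_support_ext_quotient_prime T M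
    (closedPoint_mem_support A (Abelian.Ext M T i))
  obtain ⟨j, hj, hmem⟩ := exists_le_mem_support_ext_quotient_self T hQ
  have := h j hj
  simp [Module.support_eq_empty] at hmem

theorem exists_isWeaklyRegular_injective_residue (T : ModuleCat.{u} A) [Module.Finite A T]
    [Nontrivial T] {r : ℕ} (hlt : ∀ i < r, Subsingleton (Abelian.Ext (residueModule A) T i))
    (hr : Nontrivial (Abelian.Ext (residueModule A) T r)) :
    ∃ rs : List A, rs.length = r ∧ (∀ x ∈ rs, x ∈ maximalIdeal A) ∧ IsWeaklyRegular T rs ∧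
      ∃ f : residueModule A →ₗ[A] (T ⧸ Ideal.ofList rs • (⊤ : Submodule A T)),
        Function.Injective f := by
  have hsupp : Module.support A (residueModule A) =
      PrimeSpectrum.zeroLocus (maximalIdeal A : Set A) := by
    rw [Module.support_eq_zeroLocus, Ideal.annihilator_quotient, closedPoint]
  have smul_lt : maximalIdeal A • (⊤ : Submodule A T) < ⊤ :=
    (Submodule.top_ne_ideal_smul_of_le_jacobson_annihilator
      (maximalIdeal_le_jacobson _)).symm.lt_top
  obtain ⟨rs, rfl, hrs, hreg⟩ := ModuleCat.exists_isRegular_of_exists_subsingleton_ext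
    (maximalIdeal A) r T smul_lt (residueModule A) hsupp hlt
  refine ⟨rs, rfl, hrs, hreg.1, (exists_injective_residue_or_isSMulRegular _).resolve_right ?_⟩
  rintro ⟨x, hx, hx_reg⟩
  have hmem : ∀ y ∈ rs ++ [x], y ∈ maximalIdeal A := by simpa [or_imp, forall_and] using ⟨hrs, hx⟩
  have hreg' : IsRegular T (rs ++ [x]) :=
    (isRegular_iff_isWeaklyRegular_of_subset_maximalIdeal hmem).mpr
      ((isWeaklyRegular_append_iff T rs [x]).mpr
        ⟨hreg.1, (isWeaklyRegular_singleton_iff _ x).mpr hx_reg⟩)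
  exact not_subsingleton _ (ModuleCat.subsingleton_ext_of_exists_isRegular (maximalIdeal A)
    (residueModule A) hsupp.le T smul_lt (rs ++ [x]) hmem hreg' rs.length (by simp))

lemma subsingleton_ext_quotient_ofList {rs : List A} (hrs : ∀ x ∈ rs, x ∈ maximalIdeal A)
    (hreg : IsWeaklyRegular A rs) (Y : ModuleCat.{u} A) {i : ℕ} (hi : rs.length < i) :
    Subsingleton
      (Abelian.Ext (ModuleCat.of A (A ⧸ Ideal.ofList rs • (⊤ : Submodule A A))) Y i) := by
  have hpd : projectiveDimension
      (ModuleCat.of A (A ⧸ Ideal.ofList rs • (⊤ : Submodule A A))) = rs.length := by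
    rw [ModuleCat.projectiveDimension_quotient_eq_add_length_of_isWeaklyRegular (.of A A) rs hreg
      hrs, ModuleCat.projectiveDimension_eq_zero_of_projective, zero_add]
  have : HasProjectiveDimensionLE _ rs.length := (projectiveDimension_le_iff _ _).mp hpd.le
  exact HasProjectiveDimensionLT.subsingleton _ (rs.length + 1) i hi Y

theorem nontrivial_ext_residue_iff (hA : ∃ b, ∀ i > b, Subsingleton
      (Abelian.Ext (residueModule A) (ModuleCat.of A A) i))
    {d : ℕ} (hd : Order.height (closedPoint A) = d) (i : ℕ) :
    Nontrivial (Abelian.Ext (residueModule A) (ModuleCat.of A A) i) ↔ i = d := by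
  let s : Set ℕ := {i | Nontrivial (Abelian.Ext (residueModule A) (ModuleCat.of A A) i)}
  have hds : d ∈ s := (Module.nonempty_support_iff (R := A)).mp
    ⟨_, mem_support_ext_quotient_of_height_eq hd⟩
  have hs_bdd : BddAbove s := by
    obtain ⟨b, hb⟩ := hA
    exact ⟨b, fun i hi => not_lt.mp fun hbi => not_subsingleton_iff_nontrivial.mpr hi (hb i hbi)⟩
  have subsingleton_of_notMem {i : ℕ} (hi : i ∉ s) :
      Subsingleton (Abelian.Ext (residueModule A) (ModuleCat.of A A) i) :=
    not_nontrivial_iff_subsingleton.mp hi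
  obtain ⟨rs, hlen, hrs, hreg, f, hf⟩ := exists_isWeaklyRegular_injective_residue
    (ModuleCat.of A A) (fun i hi => subsingleton_of_notMem (Nat.notMem_of_lt_sInf hi))
    (Nat.sInf_mem ⟨d, hds⟩)
  have sSup_le_sInf : sSup s ≤ sInf s := by
    -- In the top degree, nonvanishing passes along the embedding of the residue field into
    -- `A ⧸ (rs)`, whose projective dimension is the bottom degree.
    by_contra! hlt
    have : Nontrivial _ := Nat.sSup_mem ⟨d, hds⟩ hs_bdd
    have hsub := subsingleton_ext_of_forall_residue (i := sSup s + 1) (ModuleCat.of A A)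
      (fun j hj => subsingleton_of_notMem fun hjs => by
        have := le_csSup hs_bdd hjs
        omega)
    have hnt := nontrivial_ext_of_injective (M := residueModule A) (N := .of A _) f hf
      (hsub _)
    exact not_subsingleton _ (subsingleton_ext_quotient_ofList hrs hreg (.of A A) (hlen ▸ hlt))
  refine ⟨fun hi => ?_, fun h => h ▸ hds⟩
  have := le_csSup hs_bdd (show i ∈ s from hi)
  have := le_csSup hs_bdd hds
  have := Nat.sInf_le (show i ∈ s from hi)
  have := Nat.sInf_le hds
  omega

theorem subsingleton_ext_of_height_closedPoint_lt (hA : ∃ b, ∀ i > b, Subsingleton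
      (Abelian.Ext (residueModule A) (ModuleCat.of A A) i))
    {d : ℕ} (hd : Order.height (closedPoint A) = d) (M : ModuleCat.{u} A) [Module.Finite A M]
    {i : ℕ} (hi : d < i) : Subsingleton (Abelian.Ext M (ModuleCat.of A A) i) :=
  subsingleton_ext_of_forall_residue _ (fun j hj => not_nontrivial_iff_subsingleton.mp fun h =>
    (hi.trans_le hj).ne' ((nontrivial_ext_residue_iff hA hd j).mp h)) M

theorem nontrivial_ext_iff_of_support_eq (hA : ∃ b, ∀ i > b, Subsingleton
      (Abelian.Ext (residueModule A) (ModuleCat.of A A) i))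
    {d : ℕ} (hd : Order.height (closedPoint A) = d) (M : ModuleCat.{u} A) [Module.Finite A M]
    (hM : Module.support A M = {closedPoint A}) (i : ℕ) :
    Nontrivial (Abelian.Ext M (ModuleCat.of A A) i) ↔ i = d := by
  constructor
  · intro hnt
    obtain ⟨Q, hQ, hmem⟩ := exists_mem_support_ext_quotient_prime (.of A A) M
      (closedPoint_mem_support A (Abelian.Ext M (.of A A) i))
    obtain rfl : Q = closedPoint A := hM.le hQ
    exact (nontrivial_ext_residue_iff hA hd i).mp
      ((Module.nonempty_support_iff (R := A)).mp ⟨_, hmem⟩)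
  · rintro rfl
    obtain ⟨f, hf⟩ := exists_injective_residue_of_support_eq hM
    have : Nontrivial (Abelian.Ext (residueModule A) (ModuleCat.of A A) i) :=
      (nontrivial_ext_residue_iff hA hd i).mpr rfl
    exact nontrivial_ext_of_injective (M := residueModule A) f hf
      (subsingleton_ext_of_height_closedPoint_lt hA hd _ i.lt_succ_self)

end Local

section Localization

open ModuleCat (localizedModuleFunctor)

variable {R : Type u} [CommRing R] (S : Submonoid R)

lemma isLocalizedModule_of_exact {M₁ M₂ M₃ N₁ N₂ N₃ : Type*}
    [AddCommGroup M₁] [Module R M₁] [AddCommGroup M₂] [Module R M₂] [AddCommGroup M₃] [Module R M₃]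
    [AddCommGroup N₁] [Module R N₁] [AddCommGroup N₂] [Module R N₂] [AddCommGroup N₃] [Module R N₃]
    {f : M₁ →ₗ[R] M₂} {g : M₂ →ₗ[R] M₃} {f' : N₁ →ₗ[R] N₂} {g' : N₂ →ₗ[R] N₃}
    (hfg : Function.Exact f g) (hg : Function.Surjective g)
    (hfg' : Function.Exact f' g') (hg' : Function.Surjective g')
    (a : M₁ →ₗ[R] N₁) (b : M₂ →ₗ[R] N₂) (c : M₃ →ₗ[R] N₃)
    [IsLocalizedModule S a] [IsLocalizedModule S b]
    (hab : ∀ x, f' (a x) = b (f x)) (hbc : ∀ y, g' (b y) = c (g y)) :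
    IsLocalizedModule S c := by
  have smul_mem_range {s : S} {y : N₂} (hy : s • y ∈ LinearMap.range f') :
      y ∈ LinearMap.range f' := by
    obtain ⟨x, hx⟩ := hy
    obtain ⟨x', rfl⟩ := ((Module.End.isUnit_iff _).mp (IsLocalizedModule.map_units a s)).2 x
    refine ⟨x', ((Module.End.isUnit_iff _).mp (IsLocalizedModule.map_units b s)).1 ?_⟩
    exact (f'.map_smul_of_tower s x').symm.trans hx
  constructor
  · intro s
    rw [Module.End.isUnit_iff]
    constructor
    · rw [injective_iff_map_eq_zero]
      intro z hz
      obtain ⟨y, rfl⟩ := hg' z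
      exact (hfg' y).mpr (smul_mem_range ((hfg' (s • y)).mp ((g'.map_smul_of_tower s y).trans hz)))
    · intro z
      obtain ⟨y, rfl⟩ := hg' z
      obtain ⟨y', rfl⟩ := ((Module.End.isUnit_iff _).mp (IsLocalizedModule.map_units b s)).2 y
      exact ⟨g' y', (g'.map_smul_of_tower s y').symm⟩
  · intro z
    obtain ⟨y, rfl⟩ := hg' z
    obtain ⟨⟨m, s⟩, hm⟩ := IsLocalizedModule.surj S b y
    exact ⟨(g m, s), by rw [← hbc, ← hm]; exact (g'.map_smul_of_tower s y).symm⟩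
  · intro z₁ z₂ hz
    obtain ⟨y₁, rfl⟩ := hg z₁
    obtain ⟨y₂, rfl⟩ := hg z₂
    rw [← hbc, ← hbc, ← sub_eq_zero, ← map_sub, ← map_sub] at hz
    obtain ⟨x, hx⟩ := (hfg' _).mp hz
    obtain ⟨⟨m, s⟩, hm⟩ := IsLocalizedModule.surj S a x
    have hb : b (f m) = b (s • (y₁ - y₂)) := by
      rw [← hab, ← hm, LinearMap.map_smul_of_tower, hx, LinearMap.map_smul_of_tower]
    obtain ⟨t, ht⟩ := IsLocalizedModule.exists_of_eq (S := S) hb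
    refine ⟨t * s, sub_eq_zero.mp ?_⟩
    have hgt := congrArg g ht
    simp only [LinearMap.map_smul_of_tower, map_sub, hfg.apply_apply_eq_zero, smul_zero] at hgt
    rw [mul_smul, mul_smul, ← smul_sub, ← smul_sub, ← hgt]

attribute [local instance] ModuleCat.Algebra.instLinear

lemma isLocalizedModule_mapExtLinearMap_succ {A : Type u} [CommRing A] [Algebra R A]
    (F : ModuleCat.{u} R ⥤ ModuleCat.{u} A) [F.Additive] [F.Linear R]
    [Limits.PreservesFiniteLimits F] [Limits.PreservesFiniteColimits F]
    {T : ShortComplex (ModuleCat.{u} R)} (hT : T.ShortExact) [Projective T.X₂]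
    [F.PreservesProjectiveObjects] (Y : ModuleCat.{u} R) (i : ℕ)
    [IsLocalizedModule S (F.mapExtLinearMap R T.X₁ Y i)]
    [IsLocalizedModule S (F.mapExtLinearMap R T.X₂ Y i)] :
    IsLocalizedModule S (F.mapExtLinearMap R T.X₃ Y (i + 1)) := by
  have hFT := hT.map_of_exact F
  have : Projective (T.map F).X₂ := F.projective_obj T.X₂
  refine isLocalizedModule_of_exact S
    (f := (Abelian.Ext.mk₀ T.f).precompOfLinear R Y (zero_add i))
    (g := hT.extClass.precompOfLinear R Y (add_comm 1 i))
    (f' := (Abelian.Ext.mk₀ (F.map T.f)).precompOfLinear R (F.obj Y) (zero_add i))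
    (g' := hFT.extClass.precompOfLinear R (F.obj Y) (add_comm 1 i))
    (exact_precompOfLinear_extClass R hT Y i)
    (precomp_extClass_surjective_of_projective_X₂ Y hT i)
    (exact_precompOfLinear_extClass R hFT (F.obj Y) i)
    (precomp_extClass_surjective_of_projective_X₂ (F.obj Y) hFT i)
    (F.mapExtLinearMap R T.X₂ Y i) (F.mapExtLinearMap R T.X₁ Y i) _ (fun x => ?_) (fun y => ?_)
  · simp [Functor.mapExtLinearMap_apply, Abelian.Ext.mapExactFunctor_comp,
      Abelian.Ext.mapExactFunctor_mk₀]
  · change hFT.extClass.comp (y.mapExactFunctor F) (add_comm 1 i) =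
      (hT.extClass.comp y (add_comm 1 i)).mapExactFunctor F
    rw [Abelian.Ext.mapExactFunctor_comp, Abelian.Ext.mapExactFunctor_extClass]
    rfl

/-- Linear maps between localized modules, as morphisms in the category of modules, `R`-linearly. It
compares two `R`-actions: on values of linear maps, and through the linear structure of the category
of modules over `Localization S`. -/
def localizedHomEquiv (X Y : ModuleCat.{u} R) :
    (X.localizedModule S →ₗ[Localization S] Y.localizedModule S) ≃ₗ[R]
      ((localizedModuleFunctor.{u} S).obj X ⟶ (localizedModuleFunctor.{u} S).obj Y) where
  __ := ModuleCat.homAddEquiv.symm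
  map_smul' r f := by
    ext x
    exact (algebraMap_smul (Localization S) r (f x)).symm

instance : (localizedModuleFunctor.{u} S).Linear R where
  map_smul {X Y} f r :=
    (congrArg (localizedHomEquiv S X Y) (map_smul (IsLocalizedModule.mapExtendScalars S
      (X.localizedModuleMkLinearMap S) (Y.localizedModuleMkLinearMap S) (Localization S))
      r f.hom)).trans (map_smul (localizedHomEquiv S X Y) r _)

/-- The localization of a ring, as a localized module of the ring. -/
def localizedModuleSelfIso :
    (ModuleCat.of R R).localizedModule S ≅ ModuleCat.of (Localization S) (Localization S) :=
  haveI := ModuleCat.localizedModule_isLocalizedModule (.of R R) S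
  ((IsLocalizedModule.linearEquiv S ((ModuleCat.of R R).localizedModuleMkLinearMap S)
    (Algebra.linearMap R (Localization S))).extendScalarsOfIsLocalization S
      (Localization S)).toModuleIso

instance : (localizedModuleFunctor.{u} S).PreservesProjectiveObjects where
  projective_obj {P} _ := by
    have : Module.Projective R P := (IsProjective.iff_projective P).mpr inferInstance
    have : Module.Projective (Localization S) (P.localizedModule S) :=
      Module.projective_of_isLocalizedModule S (P.localizedModuleMkLinearMap S)
    exact (IsProjective.iff_projective (P.localizedModule S)).mp this

variable [IsNoetherianRing R]

lemma isLocalizedModule_mapExtLinearMap_zero (X Y : ModuleCat.{u} R) [Module.Finite R X] :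
    IsLocalizedModule S ((localizedModuleFunctor.{u} S).mapExtLinearMap R X Y 0) := by
  have : Module.FinitePresentation R X := Module.finitePresentation_of_finite R X
  let e : Abelian.Ext X Y 0 ≃ₗ[R] (X →ₗ[R] Y) :=
    Abelian.Ext.linearEquiv₀.trans ModuleCat.homLinearEquiv
  let e' := (localizedHomEquiv S X Y).trans (Abelian.Ext.linearEquiv₀ (R := R)).symm
  have h : (localizedModuleFunctor.{u} S).mapExtLinearMap R X Y 0 = e'.toLinearMap ∘ₗ
      (IsLocalizedModule.mapExtendScalars S (X.localizedModuleMkLinearMap S)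
        (Y.localizedModuleMkLinearMap S) (Localization S)) ∘ₗ e.toLinearMap :=
    LinearMap.ext (congrFun (Abelian.Ext.mapExactFunctor₀ _ X Y))
  rw [h]
  infer_instance

theorem isLocalizedModule_mapExtLinearMap (X Y : ModuleCat.{u} R) [Module.Finite R X] (i : ℕ) :
    IsLocalizedModule S ((localizedModuleFunctor.{u} S).mapExtLinearMap R X Y i) := by
  induction i generalizing X with
  | zero => exact isLocalizedModule_mapExtLinearMap_zero S X Y
  | succ i ih =>
    obtain ⟨P, _, _, _, _, g, hg⟩ := Module.exists_finite_presentation R X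
    have hS := LinearMap.shortExact_shortComplexKer hg
    have := ih g.shortComplexKer.X₁
    have := ih g.shortComplexKer.X₂
    exact isLocalizedModule_mapExtLinearMap_succ S (localizedModuleFunctor.{u} S) hS Y i

theorem mem_support_ext_iff (X : ModuleCat.{u} R) [Module.Finite R X] (i : ℕ)
    (p : PrimeSpectrum R) :
    p ∈ Module.support R (Abelian.Ext X (ModuleCat.of R R) i) ↔
      Nontrivial (Abelian.Ext (X.localizedModule p.asIdeal.primeCompl)
        (ModuleCat.of (Localization.AtPrime p.asIdeal) (Localization.AtPrime p.asIdeal)) i) := by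
  have := isLocalizedModule_mapExtLinearMap p.asIdeal.primeCompl X (ModuleCat.of R R) i
  rw [Module.mem_support_iff, (IsLocalizedModule.iso p.asIdeal.primeCompl
    ((localizedModuleFunctor.{u} p.asIdeal.primeCompl).mapExtLinearMap R X
      (ModuleCat.of R R) i)).toEquiv.nontrivial_congr]
  exact (extCongr (Localization.AtPrime p.asIdeal) (Iso.refl _)
    (localizedModuleSelfIso p.asIdeal.primeCompl) i).toEquiv.nontrivial_congr

end Localization

section Bridge

variable {R : Type u} [CommRing R] {X : ModuleCat.{u} R} (P : ProjectiveResolution X)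
  {Y : ModuleCat.{u} R}

lemma extMk_zero_eq_zero_iff {f : P.complex.X 0 ⟶ Y} {m : ℕ}
    (hm : 0 + 1 = m) (hf : P.complex.d m 0 ≫ f = 0) :
    P.extMk f m hm hf = 0 ↔ f = 0 := by
  refine ⟨fun h => ?_, by rintro rfl; exact P.extMk_zero m hm⟩
  rw [← P.extEquivCohomologyClass.apply_eq_iff_eq,
    ProjectiveResolution.extEquivCohomologyClass_extMk,
    ProjectiveResolution.extEquivCohomologyClass_zero,
    CochainComplex.HomComplex.CohomologyClass.mk_eq_zero_iff,
    CochainComplex.HomComplex.Cocycle.toSingleMk_mem_coboundaries_iff _ _ _ _ _ 1 (by simp)] at h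
  obtain ⟨g, hg⟩ := h
  have d_eq_zero : P.cochainComplex.d (-((0 : ℕ) : ℤ)) 1 = 0 :=
    (P.cochainComplex.isZero_of_isStrictlyLE 0 1 (by simp)).eq_of_tgt _ _
  rw [d_eq_zero, Limits.zero_comp] at hg
  rw [← cancel_epi (P.cochainComplexXIso (-((0 : ℕ) : ℤ)) 0 rfl).hom, ← hg, Limits.comp_zero]

lemma smul_extMk {n : ℕ} {f : P.complex.X n ⟶ Y} {m : ℕ} (hm : n + 1 = m)
    (hf : P.complex.d m n ≫ f = 0) (r : R) :
    r • P.extMk f m hm hf = P.extMk (r • f) m hm (by rw [Linear.comp_smul, hf, smul_zero]) := by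
  rw [Abelian.Ext.smul_eq_comp_mk₀, P.extMk_comp_mk₀]
  simp only [Linear.comp_smul, Category.comp_id]

variable (Y) (n : ℕ)

/-- The class in `Ext` of a cocycle of the complex of linear maps from a projective resolution. -/
def cocyclesToExt :
    LinearMap.ker ((P.complex.linearYonedaObj R Y).sc n).g.hom →ₗ[R] Abelian.Ext X Y n where
  toFun f := P.extMk f.1 _ (CochainComplex.next ℕ n).symm f.2
  map_add' _ _ := (P.add_extMk _ _ _ _ _ _).symm
  map_smul' r f := (smul_extMk P (CochainComplex.next ℕ n).symm f.2 r).symm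

lemma cocyclesToExt_surjective : Function.Surjective (cocyclesToExt P Y n) := fun y =>
  let ⟨f, hf, hfy⟩ := P.extMk_surjective y _ (CochainComplex.next ℕ n).symm
  ⟨⟨f, hf⟩, hfy⟩

lemma range_toCycles_eq_ker_cocyclesToExt :
    LinearMap.range ((P.complex.linearYonedaObj R Y).sc n).moduleCatToCycles =
      LinearMap.ker (cocyclesToExt P Y n) := by
  have hn := (CochainComplex.next ℕ n).symm
  ext f
  cases n with
  | zero =>
    have f_eq_zero : ((P.complex.linearYonedaObj R Y).sc 0).f = 0 :=
      (P.complex.linearYonedaObj R Y).shape _ _ (by simp)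
    refine Iff.trans ⟨?_, fun hf => ⟨0, ?_⟩⟩ (extMk_zero_eq_zero_iff P hn f.2).symm
    · rintro ⟨x, rfl⟩
      exact ConcreteCategory.congr_hom f_eq_zero x
    · rw [map_zero]
      exact Subtype.ext hf.symm
  | succ m =>
    refine Iff.trans ⟨?_, ?_⟩ (P.extMk_eq_zero_iff f.1 _ hn f.2 _
      (congrArg (· + 1) (CochainComplex.prev_nat_succ m))).symm
    · rintro ⟨x, rfl⟩
      exact ⟨x, rfl⟩
    · rintro ⟨x, hx⟩
      exact ⟨x, Subtype.ext hx⟩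

/-- The comparison of the `Ext` modules defined by deriving the linear Yoneda functor with those
defined in the derived category. -/
def extEquiv (X Y : ModuleCat.{u} R) (n : ℕ) :
    ((_root_.Ext.{u} R (ModuleCat.{u} R) n).obj (op X)).obj Y ≃ₗ[R] Abelian.Ext X Y n :=
  letI P := projectiveResolution X
  (P.isoExt (R := R) n Y ≪≫
    ((P.complex.linearYonedaObj R Y).sc n).moduleCatHomologyIso).toLinearEquiv ≪≫ₗ
  Submodule.quotEquivOfEq _ _ (range_toCycles_eq_ker_cocyclesToExt P Y n) ≪≫ₗ
  (cocyclesToExt P Y n).quotKerEquivOfSurjective (cocyclesToExt_surjective P Y n)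

end Bridge

section Gorenstein

open IsLocalRing

lemma HasFiniteSelfInjDim.exists_subsingleton_ext {A : Type u} [CommRing A]
    (hA : HasFiniteSelfInjDim A) (M : ModuleCat.{u} A) :
    ∃ b, ∀ i > b, Subsingleton (Abelian.Ext M (ModuleCat.of A A) i) := by
  obtain ⟨b, hb⟩ := hA
  refine ⟨b, fun i hi => ?_⟩
  have := hb M i hi
  exact (extEquiv M (ModuleCat.of A A) i).symm.toEquiv.subsingleton

variable {R : Type u} [CommRing R]

lemma annihilator_le_annihilator_of_isLocalizedModule {M M' : Type*} [AddCommGroup M] [Module R M]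
    [AddCommGroup M'] [Module R M'] (S : Submonoid R) (f : M →ₗ[R] M') [IsLocalizedModule S f] :
    Module.annihilator R M ≤ Module.annihilator R M' := by
  intro r hr
  rw [Module.mem_annihilator] at hr ⊢
  intro m'
  obtain ⟨⟨m, s⟩, rfl⟩ := IsLocalizedModule.mk'_surjective S f m'
  change r • IsLocalizedModule.mk' f m s = 0
  rw [← IsLocalizedModule.mk'_smul, hr, IsLocalizedModule.mk'_zero]

lemma support_eq_closedPoint_of_minimal {p : PrimeSpectrum R} {M M' A : Type*} [AddCommGroup M]
    [Module R M] [Module.Finite R M] [AddCommGroup M'] [Module R M'] (f : M →ₗ[R] M')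
    [IsLocalizedModule p.asIdeal.primeCompl f] [CommRing A] [Algebra R A] [IsLocalRing A]
    [IsLocalization.AtPrime A p.asIdeal] [Module A M'] [IsScalarTower R A M']
    (hp : Minimal (· ∈ Module.support R M) p) :
    Module.support A M' = {closedPoint A} := by
  have : Nontrivial (LocalizedModule p.asIdeal.primeCompl M) := hp.prop
  have : Nontrivial M' := (IsLocalizedModule.iso p.asIdeal.primeCompl f).symm.toEquiv.nontrivial
  refine Set.Subset.antisymm (fun Q hQ => ?_)
    (Set.singleton_subset_iff.mpr (closedPoint_mem_support A M'))
  let e := IsLocalization.AtPrime.primeSpectrumOrderIso A p.asIdeal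
  have e_mem_support' : (e Q : PrimeSpectrum R) ∈ Module.support R M' :=
    (Module.support_subset_preimage_comap (R := R) hQ :)
  have e_mem_support : (e Q : PrimeSpectrum R) ∈ Module.support R M :=
    Module.mem_support_iff_of_finite.mpr <|
      (annihilator_le_annihilator_of_isLocalizedModule p.asIdeal.primeCompl f).trans
        (Module.annihilator_le_of_mem_support e_mem_support')
  have e_closedPoint_le : (e (closedPoint A) : PrimeSpectrum R) ≤ e Q :=
    (e _).2.trans (hp.le_of_le e_mem_support (e Q).2)
  exact le_antisymm le_top (e.le_iff_le.mp e_closedPoint_le)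

lemma height_closedPoint_localization (p : PrimeSpectrum R) :
    Order.height (closedPoint (Localization.AtPrime p.asIdeal)) = Order.height p := by
  rw [← PrimeSpectrum.height_eq_orderHeight, ← PrimeSpectrum.height_eq_orderHeight]
  exact (IsLocalization.height_under p.asIdeal.primeCompl _).symm.trans
    (congrArg Ideal.height (IsLocalization.AtPrime.under_maximalIdeal _ p.asIdeal))

variable [IsNoetherianRing R]

lemma exists_height_eq_natCast (p : PrimeSpectrum R) : ∃ d : ℕ, Order.height p = d := by
  rw [← PrimeSpectrum.height_eq_orderHeight]
  exact ENat.ne_top_iff_exists.mp (Ideal.height_ne_top p.2.ne_top) |>.imp fun _ => Eq.symm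

instance (X : ModuleCat.{u} R) [Module.Finite R X] (S : Submonoid R) :
    Module.Finite (Localization S) (X.localizedModule S) :=
  Module.Finite.of_isLocalizedModule S (X.localizedModuleMkLinearMap S)

theorem le_height_of_mem_support_ext {X : ModuleCat.{u} R} [Module.Finite R X] {i : ℕ}
    {p : PrimeSpectrum R} (hp : HasFiniteSelfInjDim (Localization.AtPrime p.asIdeal))
    (hi : p ∈ Module.support R (Abelian.Ext X (ModuleCat.of R R) i)) :
    (i : ℕ∞) ≤ Order.height p := by
  obtain ⟨d, hd⟩ := exists_height_eq_natCast p
  rw [hd, Nat.cast_le]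
  by_contra! hlt
  exact not_nontrivial_iff_subsingleton.mpr (subsingleton_ext_of_height_closedPoint_lt
    (hp.exists_subsingleton_ext _) ((height_closedPoint_localization p).trans hd) _ hlt)
    ((mem_support_ext_iff X i p).mp hi)

theorem mem_support_ext_iff_height_eq {X : ModuleCat.{u} R} [Module.Finite R X] (i : ℕ)
    {p : PrimeSpectrum R} (hp : HasFiniteSelfInjDim (Localization.AtPrime p.asIdeal))
    (hmin : Minimal (· ∈ Module.support R X) p) :
    p ∈ Module.support R (Abelian.Ext X (ModuleCat.of R R) i) ↔ Order.height p = i := by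
  obtain ⟨d, hd⟩ := exists_height_eq_natCast p
  rw [mem_support_ext_iff, nontrivial_ext_iff_of_support_eq (hp.exists_subsingleton_ext _)
    ((height_closedPoint_localization p).trans hd) (X.localizedModule p.asIdeal.primeCompl)
    (support_eq_closedPoint_of_minimal (X.localizedModuleMkLinearMap p.asIdeal.primeCompl) hmin),
    hd, Nat.cast_inj, eq_comm]

end Gorenstein

theorem stmt9 (R : Type u) [CommRing R] [IsNoetherianRing R] (hGor : IsGorensteinRing R)
    (N : Type u) [AddCommGroup N] [Module R N] [Module.Finite R N] (t : ℕ) :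
    (Module.support R (extPow R N t) ⊆ Module.support R N ∧
      ∀ p : PrimeSpectrum R, p ∈ Module.support R (extPow R N t) →
        (t : ℕ∞) ≤ Order.height p) ∧
    (∀ p : PrimeSpectrum R, p ∈ Module.support R N →
      (∀ q ∈ Module.support R N, q ≤ p → q = p) →
      (p ∈ Module.support R (extPow R N t) ↔ Order.height p = (t : ℕ∞))) := by
  have selfInjDim (p : PrimeSpectrum R) : HasFiniteSelfInjDim (Localization.AtPrime p.asIdeal) :=
    (hGor p.asIdeal).2.2
  rw [(extEquiv (ModuleCat.of R N) (ModuleCat.of R R) t).support_eq]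
  refine ⟨⟨support_ext_subset (.of R N) (.of R R) t, fun p hp => ?_⟩, fun p hp hmin => ?_⟩
  · exact le_height_of_mem_support_ext (selfInjDim p) hp
  · exact mem_support_ext_iff_height_eq t (selfInjDim p)
      ⟨hp, fun q hq hqp => (hmin q hq hqp).ge⟩

end
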